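/- (Outcome-weighted necessary condition, second difference) Under the IV assumptions (Independence, Relevance, Monotonicity, Exclusion), it holds that ΔE[(D∧ − D2)·Y | Z] = E[Y(0,1); {C1,A2}] − E[Y(0,1); {N1,C2}]. Consequently, if μ({C1,A2}) = μ({N1,C2}) =: p2 > 0, then ΔE[(D∧ − D2)·Y | Z] = (E[Y(0,1) | {C1,A2}] − E[Y(0,1) | {N1,C2}])·p2, which is zero when p2 = 0 or when the two conditional expectations agree. (Proposition 2, eq. (12), from the appendix identity) -/

import Mathlib

open MeasureTheory ProbabilityTheory

noncomputable section

variable {Ω : Type*} [MeasurableSpace Ω]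

/-- Observed first-part treatment: `D1 = D1(1)·Z + D1(0)·(1−Z)`. -/
def obsD1 (Z : Ω → ℝ) (D1 : Bool → Ω → ℝ) (ω : Ω) : ℝ :=
  D1 true ω * Z ω + D1 false ω * (1 - Z ω)

/-- Observed second-part treatment. -/
def obsD2 (Z : Ω → ℝ) (D1 : Bool → Ω → ℝ) (D2 : Bool → Bool → Ω → ℝ) (ω : Ω) : ℝ :=
  (D2 true true ω * obsD1 Z D1 ω + D2 true false ω * (1 - obsD1 Z D1 ω)) * Z ω +
  (D2 false true ω * obsD1 Z D1 ω + D2 false false ω * (1 - obsD1 Z D1 ω)) * (1 - Z ω)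

/-- Summary treatment `D∧ = D1·D2`. -/
def obsDand (Z : Ω → ℝ) (D1 : Bool → Ω → ℝ) (D2 : Bool → Bool → Ω → ℝ) (ω : Ω) : ℝ :=
  obsD1 Z D1 ω * obsD2 Z D1 D2 ω

/-- Summary treatment `D∨ = D1 + D2 − D1·D2`. -/
def obsDor (Z : Ω → ℝ) (D1 : Bool → Ω → ℝ) (D2 : Bool → Bool → Ω → ℝ) (ω : Ω) : ℝ :=
  obsD1 Z D1 ω + obsD2 Z D1 D2 ω - obsD1 Z D1 ω * obsD2 Z D1 D2 ω

/-- Observed outcome `Y = Σ_{d1,d2} Y(Z,d1,d2)·1{D1=d1, D2=d2}`, written out using that the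
observed treatments and the instrument are {0,1}-valued. The first index of `Yp` is `z`, the
second is `d1`, the third is `d2`. -/
def obsY (Z : Ω → ℝ) (D1 : Bool → Ω → ℝ) (D2 : Bool → Bool → Ω → ℝ)
    (Yp : Bool → Bool → Bool → Ω → ℝ) (ω : Ω) : ℝ :=
  (Yp true true true ω * obsD1 Z D1 ω * obsD2 Z D1 D2 ω +
   Yp true false true ω * (1 - obsD1 Z D1 ω) * obsD2 Z D1 D2 ω +
   Yp true true false ω * obsD1 Z D1 ω * (1 - obsD2 Z D1 D2 ω) +
   Yp true false false ω * (1 - obsD1 Z D1 ω) * (1 - obsD2 Z D1 D2 ω)) * Z ω +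
  (Yp false true true ω * obsD1 Z D1 ω * obsD2 Z D1 D2 ω +
   Yp false false true ω * (1 - obsD1 Z D1 ω) * obsD2 Z D1 D2 ω +
   Yp false true false ω * obsD1 Z D1 ω * (1 - obsD2 Z D1 D2 ω) +
   Yp false false false ω * (1 - obsD1 Z D1 ω) * (1 - obsD2 Z D1 D2 ω)) * (1 - Z ω)

/-- `ΔE[A|Z] := E[A | Z = 1] − E[A | Z = 0]`, expectations under conditional measures. -/
def dE (μ : Measure Ω) (Z A : Ω → ℝ) : ℝ :=
  (∫ ω, A ω ∂(μ[|Z ⁻¹' {1}])) - (∫ ω, A ω ∂(μ[|Z ⁻¹' {0}]))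

/-- The full-complier event `{C1,C2}`. -/
def CCev (D1 : Bool → Ω → ℝ) (D2 : Bool → Bool → Ω → ℝ) : Set Ω :=
  {ω | D1 true ω - D1 false ω = 1 ∧ D2 true true ω - D2 false false ω = 1}

/-- The mover event `{C1,N2}`. -/
def CNev (D1 : Bool → Ω → ℝ) (D2 : Bool → Bool → Ω → ℝ) : Set Ω :=
  {ω | D1 true ω - D1 false ω = 1 ∧ D2 true true ω = 0 ∧ D2 false false ω = 0}

/-- The mover event `{C1,A2}`. -/
def CAev (D1 : Bool → Ω → ℝ) (D2 : Bool → Bool → Ω → ℝ) : Set Ω :=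
  {ω | D1 true ω - D1 false ω = 1 ∧ D2 true true ω = 1 ∧ D2 false false ω = 1}

/-- The mover event `{N1,C2}`. -/
def NCev (D1 : Bool → Ω → ℝ) (D2 : Bool → Bool → Ω → ℝ) : Set Ω :=
  {ω | D1 true ω = 0 ∧ D1 false ω = 0 ∧ D2 true false ω - D2 false false ω = 1}

/-- The mover event `{A1,C2}`. -/
def ACev (D1 : Bool → Ω → ℝ) (D2 : Bool → Bool → Ω → ℝ) : Set Ω :=
  {ω | D1 true ω = 1 ∧ D1 false ω = 1 ∧ D2 true true ω - D2 false true ω = 1}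

/-!
For binary treatments, `(D∧ - D2) * Y` is minus the outcome of the units that take up only the
second treatment. By independence, its `ΔE` is the integral of `Y(0,1)` over the units that would
take up only the second treatment at `Z = 0`, minus the integral over those that would at `Z = 1`.
The common part of the two events cancels, and monotonicity identifies what is left of the first
with `{C1,A2}` and what is left of the second with `{N1,C2}`.
-/

theorem sub_eq_one_iff_of_binary {R : Type*} [Ring R] [CharZero R] {a b : R}
    (ha : a = 0 ∨ a = 1) (hb : b = 0 ∨ b = 1) :
    a - b = 1 ↔ a = 1 ∧ b = 0 := by
  rcases ha with rfl | rfl <;> rcases hb with rfl | rfl <;> norm_num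

section Integration

variable {μ : Measure Ω}

theorem identDistrib_cond_of_indepFun {β γ : Type*} [MeasurableSpace β] [MeasurableSpace γ]
    [IsFiniteMeasure μ] {X : Ω → β} {Z : Ω → γ} {s : Set γ} (hZ : Measurable Z)
    (hX : AEMeasurable X μ) (h : IndepFun X Z μ) (hs : MeasurableSet s) (hμ : μ (Z ⁻¹' s) ≠ 0) :
    IdentDistrib X X (μ[|Z ⁻¹' s]) μ where
  aemeasurable_fst := hX.mono_ac cond_absolutelyContinuous
  aemeasurable_snd := hX
  map_eq := by
    ext t ht
    rw [Measure.map_apply_of_aemeasurable (hX.mono_ac cond_absolutelyContinuous) ht,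
      Measure.map_apply_of_aemeasurable hX ht, cond_apply (hZ hs), Set.inter_comm,
      h.measure_inter_preimage_eq_mul t s ht hs, mul_comm (μ (X ⁻¹' t)),
      ENNReal.inv_mul_cancel_left hμ (measure_ne_top μ _)]

theorem integral_cond_eq_integral_of_indepFun {E γ : Type*} [NormedAddCommGroup E]
    [NormedSpace ℝ E] [MeasurableSpace E] [BorelSpace E] [MeasurableSpace γ] [IsFiniteMeasure μ]
    {A X : Ω → E} {Z : Ω → γ} {s : Set γ} (hZ : Measurable Z) (hX : AEMeasurable X μ)
    (h : IndepFun X Z μ) (hs : MeasurableSet s) (hμ : μ (Z ⁻¹' s) ≠ 0)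
    (hA : ∀ ω ∈ Z ⁻¹' s, A ω = X ω) :
    ∫ ω, A ω ∂(μ[|Z ⁻¹' s]) = ∫ ω, X ω ∂μ :=
  (integral_congr_ae (ae_cond_of_forall_mem (hZ hs) hA)).trans
    (identDistrib_cond_of_indepFun hZ hX h hs hμ).integral_eq

theorem measure_preimage_zero_ne_zero_of_binary [IsProbabilityMeasure μ] {Z : Ω → ℝ}
    (hZ : Measurable Z) (hZ01 : ∀ ω, Z ω = 0 ∨ Z ω = 1) (hlt : μ (Z ⁻¹' {1}) < 1) :
    μ (Z ⁻¹' {0}) ≠ 0 := by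
  have hcompl : Z ⁻¹' {0} = (Z ⁻¹' {1})ᶜ := by
    ext ω
    rcases hZ01 ω with h | h <;> simp [h]
  rw [hcompl, Ne, prob_compl_eq_zero_iff (hZ (measurableSet_singleton 1))]
  exact hlt.ne

theorem setIntegral_sub_setIntegral_eq_sdiff {E : Type*} [NormedAddCommGroup E] [NormedSpace ℝ E]
    {f : Ω → E} {s t : Set Ω} (hs : NullMeasurableSet s μ) (ht : NullMeasurableSet t μ)
    (hfs : IntegrableOn f s μ) (hft : IntegrableOn f t μ) :
    ∫ ω in s, f ω ∂μ - ∫ ω in t, f ω ∂μ = ∫ ω in s \ t, f ω ∂μ - ∫ ω in t \ s, f ω ∂μ := by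
  rw [← integral_inter_add_sdiff₀ ht hfs, ← integral_inter_add_sdiff₀ hs hft, Set.inter_comm t s,
    add_sub_add_left_eq_sub]

end Integration

/-- The event `{D1(z) = 0, D2(z,0) = 1}` that a unit takes up only the second treatment when the
instrument is set to `z`. -/
def secondOnly (D1 : Bool → Ω → ℝ) (D2 : Bool → Bool → Ω → ℝ) (z : Bool) : Set Ω :=
  {ω | D1 z ω = 0 ∧ D2 z false ω = 1}

section SecondOnly

variable {μ : Measure Ω} {Z : Ω → ℝ} {D1 : Bool → Ω → ℝ} {D2 : Bool → Bool → Ω → ℝ}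
  {Yp : Bool → Bool → Bool → Ω → ℝ}

theorem measurableSet_secondOnly {z : Bool} (hD1 : Measurable (D1 z))
    (hD2 : Measurable (D2 z false)) : MeasurableSet (secondOnly D1 D2 z) :=
  (hD1 (measurableSet_singleton 0)).inter (hD2 (measurableSet_singleton 1))

omit [MeasurableSpace Ω] in
theorem obsDand_sub_obsD2_mul_obsY_eq_neg_indicator {z : Bool} {ω : Ω} (hz : Z ω = z.toNat)
    (hD1 : D1 z ω = 0 ∨ D1 z ω = 1) (hD2 : D2 z false ω = 0 ∨ D2 z false ω = 1) :
    (obsDand Z D1 D2 ω - obsD2 Z D1 D2 ω) * obsY Z D1 D2 Yp ω =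
      -(secondOnly D1 D2 z).indicator (Yp z false true) ω := by
  have hobs1 : obsD1 Z D1 ω = D1 z ω := by cases z <;> simp [obsD1, hz]
  have hobs2 : obsD2 Z D1 D2 ω = D2 z true ω * D1 z ω + D2 z false ω * (1 - D1 z ω) := by
    cases z <;> simp [obsD2, hobs1, hz]
  rcases hD1 with hD1 | hD1
  · have hY : obsY Z D1 D2 Yp ω =
        Yp z false true ω * D2 z false ω + Yp z false false ω * (1 - D2 z false ω) := by
      cases z <;> simp [obsY, hobs1, hobs2, hz, hD1]
    rcases hD2 with hD2 | hD2 <;> simp [obsDand, secondOnly, hobs1, hobs2, hY, hD1, hD2]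
  · simp [obsDand, secondOnly, hobs1, hD1]

theorem indepFun_indicator_secondOnly {z : Bool}
    (h : IndepFun (fun ω => (D1 z ω, D2 z false ω, Yp z false true ω)) Z μ) :
    IndepFun ((secondOnly D1 D2 z).indicator (Yp z false true)) Z μ := by
  have hs : MeasurableSet {p : ℝ × ℝ × ℝ | p.1 = 0 ∧ p.2.1 = 1} := by measurability
  have hφ : Measurable ({p : ℝ × ℝ × ℝ | p.1 = 0 ∧ p.2.1 = 1}.indicator fun p => p.2.2) :=
    Measurable.indicator (by fun_prop) hs
  exact h.comp hφ measurable_id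

theorem dE_obsDand_sub_obsD2_mul_obsY_eq_secondOnly [IsFiniteMeasure μ] (hZ : Measurable Z)
    (hZ0 : μ (Z ⁻¹' {0}) ≠ 0) (hZ1 : μ (Z ⁻¹' {1}) ≠ 0)
    (hD1meas : ∀ z, Measurable (D1 z)) (hD2meas : ∀ z, Measurable (D2 z false))
    (hY : ∀ z, AEMeasurable (Yp z false true) μ)
    (hD1 : ∀ z ω, D1 z ω = 0 ∨ D1 z ω = 1)
    (hD2 : ∀ z ω, D2 z false ω = 0 ∨ D2 z false ω = 1)
    (hindep : ∀ z, IndepFun (fun ω => (D1 z ω, D2 z false ω, Yp z false true ω)) Z μ) :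
    dE μ Z (fun ω => (obsDand Z D1 D2 ω - obsD2 Z D1 D2 ω) * obsY Z D1 D2 Yp ω) =
      ∫ ω in secondOnly D1 D2 false, Yp false false true ω ∂μ -
        ∫ ω in secondOnly D1 D2 true, Yp true false true ω ∂μ := by
  have hmeas z := measurableSet_secondOnly (hD1meas z) (hD2meas z)
  have harm (z : Bool) (hz : μ (Z ⁻¹' {(z.toNat : ℝ)}) ≠ 0) :
      ∫ ω, (obsDand Z D1 D2 ω - obsD2 Z D1 D2 ω) * obsY Z D1 D2 Yp ω
          ∂(μ[|Z ⁻¹' {(z.toNat : ℝ)}]) =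
        -∫ ω in secondOnly D1 D2 z, Yp z false true ω ∂μ := by
    rw [integral_cond_eq_integral_of_indepFun hZ ((hY z).indicator (hmeas z)).neg
        (indepFun_indicator_secondOnly (hindep z)).neg_left (measurableSet_singleton _) hz
        fun ω hω => obsDand_sub_obsD2_mul_obsY_eq_neg_indicator hω (hD1 z ω) (hD2 z ω),
      integral_neg', integral_indicator (hmeas z)]
  have harm0 := harm false (by simpa using hZ0)
  have harm1 := harm true (by simpa using hZ1)
  simp only [Bool.toNat_false, Bool.toNat_true, Nat.cast_zero, Nat.cast_one] at harm0 harm1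
  rw [dE, harm0, harm1, neg_sub_neg]

theorem secondOnly_false_sdiff_true_ae_eq_CAev
    (hD1 : ∀ z ω, D1 z ω = 0 ∨ D1 z ω = 1) (hD2 : ∀ z d ω, D2 z d ω = 0 ∨ D2 z d ω = 1)
    (hmono2 : ∀ᵐ ω ∂μ,
      D2 false true ω * D1 false ω + D2 false false ω * (1 - D1 false ω) ≤
        D2 true true ω * D1 true ω + D2 true false ω * (1 - D1 true ω)) :
    (secondOnly D1 D2 false \ secondOnly D1 D2 true : Set Ω) =ᵐ[μ] CAev D1 D2 := by
  rw [Filter.eventuallyEq_set]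
  filter_upwards [hmono2] with ω hle
  simp only [secondOnly, CAev, Set.mem_sdiff, Set.mem_ofPred_eq,
    sub_eq_one_iff_of_binary (hD1 true ω) (hD1 false ω)]
  constructor
  · rintro ⟨⟨h0, h00⟩, hleave⟩
    have h1 : D1 true ω = 1 := by
      refine (hD1 true ω).resolve_left fun h1 => hleave ⟨h1, ?_⟩
      refine (hD2 true false ω).resolve_left fun h10 => ?_
      norm_num [h0, h00, h1, h10] at hle
    have h11 : D2 true true ω = 1 := by
      refine (hD2 true true ω).resolve_left fun h11 => ?_
      norm_num [h0, h00, h1, h11] at hle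
    exact ⟨⟨h1, h0⟩, h11, h00⟩
  · rintro ⟨⟨h1, h0⟩, -, h00⟩
    simp [h1, h0, h00]

theorem secondOnly_true_sdiff_false_ae_eq_NCev
    (hD1 : ∀ ω, D1 false ω = 0 ∨ D1 false ω = 1)
    (hD2 : ∀ z ω, D2 z false ω = 0 ∨ D2 z false ω = 1)
    (hmono1 : ∀ᵐ ω ∂μ, D1 false ω ≤ D1 true ω) :
    (secondOnly D1 D2 true \ secondOnly D1 D2 false : Set Ω) =ᵐ[μ] NCev D1 D2 := by
  rw [Filter.eventuallyEq_set]
  filter_upwards [hmono1] with ω hle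
  simp only [secondOnly, NCev, Set.mem_sdiff, Set.mem_ofPred_eq,
    sub_eq_one_iff_of_binary (hD2 true ω) (hD2 false ω)]
  constructor
  · rintro ⟨⟨h1, h10⟩, henter⟩
    have h0 : D1 false ω = 0 := by
      refine (hD1 ω).resolve_right fun h0 => ?_
      norm_num [h0, h1] at hle
    have h00 : D2 false false ω = 0 := (hD2 false ω).resolve_right fun h => henter ⟨h0, h⟩
    exact ⟨h1, h0, h10, h00⟩
  · rintro ⟨h1, h0, h10, h00⟩
    simp [h1, h0, h10, h00]

theorem setIntegral_secondOnly_sub_eq_CAev_sub_NCev {E : Type*} [NormedAddCommGroup E]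
    [NormedSpace ℝ E] {f : Ω → E} (hf : Integrable f μ)
    (hD1meas : ∀ z, Measurable (D1 z)) (hD2meas : ∀ z, Measurable (D2 z false))
    (hD1 : ∀ z ω, D1 z ω = 0 ∨ D1 z ω = 1) (hD2 : ∀ z d ω, D2 z d ω = 0 ∨ D2 z d ω = 1)
    (hmono1 : ∀ᵐ ω ∂μ, D1 false ω ≤ D1 true ω)
    (hmono2 : ∀ᵐ ω ∂μ,
      D2 false true ω * D1 false ω + D2 false false ω * (1 - D1 false ω) ≤
        D2 true true ω * D1 true ω + D2 true false ω * (1 - D1 true ω)) :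
    ∫ ω in secondOnly D1 D2 false, f ω ∂μ - ∫ ω in secondOnly D1 D2 true, f ω ∂μ =
      ∫ ω in CAev D1 D2, f ω ∂μ - ∫ ω in NCev D1 D2, f ω ∂μ := by
  have hmeas z := (measurableSet_secondOnly (hD1meas z) (hD2meas z)).nullMeasurableSet (μ := μ)
  rw [setIntegral_sub_setIntegral_eq_sdiff (hmeas false) (hmeas true) hf.integrableOn
      hf.integrableOn,
    setIntegral_congr_set (secondOnly_false_sdiff_true_ae_eq_CAev hD1 hD2 hmono2),
    setIntegral_congr_set (secondOnly_true_sdiff_false_ae_eq_NCev (hD1 false) (fun z => hD2 z false)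
      hmono1)]

end SecondOnly

theorem stmt_18_general (μ : Measure Ω) [IsFiniteMeasure μ]
    (Z : Ω → ℝ) (D1 : Bool → Ω → ℝ) (D2 : Bool → Bool → Ω → ℝ)
    (Yp : Bool → Bool → Bool → Ω → ℝ)
    (hZ : Measurable Z) (hZ0 : μ (Z ⁻¹' {0}) ≠ 0) (hZ1 : μ (Z ⁻¹' {1}) ≠ 0)
    (hD1meas : ∀ z, Measurable (D1 z)) (hD2meas : ∀ z, Measurable (D2 z false))
    (hY : ∀ z, Integrable (Yp z false true) μ)
    (hD1 : ∀ z ω, D1 z ω = 0 ∨ D1 z ω = 1) (hD2 : ∀ z d ω, D2 z d ω = 0 ∨ D2 z d ω = 1)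
    (hindep : ∀ z, IndepFun (fun ω => (D1 z ω, D2 z false ω, Yp z false true ω)) Z μ)
    (hmono1 : ∀ᵐ ω ∂μ, D1 false ω ≤ D1 true ω)
    (hmono2 : ∀ᵐ ω ∂μ,
      D2 false true ω * D1 false ω + D2 false false ω * (1 - D1 false ω) ≤
        D2 true true ω * D1 true ω + D2 true false ω * (1 - D1 true ω))
    (hexcl : Yp true false true =ᵐ[μ] Yp false false true) :
    dE μ Z (fun ω => (obsDand Z D1 D2 ω - obsD2 Z D1 D2 ω) * obsY Z D1 D2 Yp ω) =
      (∫ ω in CAev D1 D2, Yp true false true ω ∂μ) -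
        (∫ ω in NCev D1 D2, Yp true false true ω ∂μ) ∧
    (μ (CAev D1 D2) = μ (NCev D1 D2) → 0 < μ (CAev D1 D2) →
      dE μ Z (fun ω => (obsDand Z D1 D2 ω - obsD2 Z D1 D2 ω) * obsY Z D1 D2 Yp ω) =
        ((∫ ω in CAev D1 D2, Yp true false true ω ∂μ) / (μ (CAev D1 D2)).toReal -
          (∫ ω in NCev D1 D2, Yp true false true ω ∂μ) / (μ (NCev D1 D2)).toReal) *
          (μ (CAev D1 D2)).toReal) := by
  have hdE : dE μ Z (fun ω => (obsDand Z D1 D2 ω - obsD2 Z D1 D2 ω) * obsY Z D1 D2 Yp ω) =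
      ∫ ω in CAev D1 D2, Yp true false true ω ∂μ -
        ∫ ω in NCev D1 D2, Yp true false true ω ∂μ := by
    rw [dE_obsDand_sub_obsD2_mul_obsY_eq_secondOnly hZ hZ0 hZ1 hD1meas hD2meas
        (fun z => (hY z).aemeasurable) hD1 (fun z => hD2 z false) hindep,
      ← integral_congr_ae (ae_restrict_of_ae hexcl),
      setIntegral_secondOnly_sub_eq_CAev_sub_NCev (hY true) hD1meas hD2meas hD1 hD2
        hmono1 hmono2]
  refine ⟨hdE, fun heq hpos => ?_⟩
  have hp : (μ (CAev D1 D2)).toReal ≠ 0 := ENNReal.toReal_ne_zero.2 ⟨hpos.ne', measure_ne_top μ _⟩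
  rw [hdE, ← heq, ← sub_div, div_mul_cancel₀ _ hp]

theorem stmt_18
    (μ : Measure Ω) [IsProbabilityMeasure μ]
    (Z : Ω → ℝ) (D1 : Bool → Ω → ℝ) (D2 : Bool → Bool → Ω → ℝ)
    (Yp : Bool → Bool → Bool → Ω → ℝ)
    (hZmeas : Measurable Z)
    (hD1meas : ∀ b, Measurable (D1 b))
    (hD2meas : ∀ b b', Measurable (D2 b b'))
    (hYmeas : ∀ z d1 d2, Measurable (Yp z d1 d2))
    (hYint : ∀ z d1 d2, Integrable (Yp z d1 d2) μ)
    (hZ01 : ∀ ω, Z ω = 0 ∨ Z ω = 1)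
    (hZpos : 0 < μ (Z ⁻¹' {1})) (hZlt : μ (Z ⁻¹' {1}) < 1)
    (hD101 : ∀ b ω, D1 b ω = 0 ∨ D1 b ω = 1)
    (hD201 : ∀ b b' ω, D2 b b' ω = 0 ∨ D2 b b' ω = 1)
    (hindep : IndepFun
      (fun ω => ((fun b => D1 b ω), (fun b b' => D2 b b' ω), (fun z d1 d2 => Yp z d1 d2 ω))) Z μ)
    (hrel1 : 0 < dE μ Z (obsD1 Z D1))
    (hrel2 : 0 < dE μ Z (obsD2 Z D1 D2))
    (hrelAnd : 0 < dE μ Z (obsDand Z D1 D2))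
    (hrelOr : 0 < dE μ Z (obsDor Z D1 D2))
    (hmono1 : ∀ᵐ ω ∂μ, D1 false ω ≤ D1 true ω)
    (hmono2 : ∀ᵐ ω ∂μ,
      D2 false true ω * D1 false ω + D2 false false ω * (1 - D1 false ω) ≤
        D2 true true ω * D1 true ω + D2 true false ω * (1 - D1 true ω))
    (hexcl : ∀ d1 d2, ∀ᵐ ω ∂μ, Yp true d1 d2 ω = Yp false d1 d2 ω) :
    dE μ Z (fun ω => (obsDand Z D1 D2 ω - obsD2 Z D1 D2 ω) * obsY Z D1 D2 Yp ω) =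
      (∫ ω in CAev D1 D2, Yp true false true ω ∂μ) -
        (∫ ω in NCev D1 D2, Yp true false true ω ∂μ) ∧
    (μ (CAev D1 D2) = μ (NCev D1 D2) → 0 < μ (CAev D1 D2) →
      dE μ Z (fun ω => (obsDand Z D1 D2 ω - obsD2 Z D1 D2 ω) * obsY Z D1 D2 Yp ω) =
        ((∫ ω in CAev D1 D2, Yp true false true ω ∂μ) / (μ (CAev D1 D2)).toReal -
          (∫ ω in NCev D1 D2, Yp true false true ω ∂μ) / (μ (NCev D1 D2)).toReal) *
          (μ (CAev D1 D2)).toReal) := by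
  exact stmt_18_general μ Z D1 D2 Yp hZmeas
    (measure_preimage_zero_ne_zero_of_binary hZmeas hZ01 hZlt) hZpos.ne' hD1meas
    (fun z => hD2meas z false) (fun z => hYint z false true) hD101 hD201
    (fun z => hindep.comp (φ := fun p => (p.1 z, p.2.1 z false, p.2.2 z false true))
      (by fun_prop) measurable_id)
    hmono1 hmono2 (hexcl false true)
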